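/- Given ε ≥ 0, r > 0 and δ ∈ (0,1), if Assumptions 1, 2 and 3 hold for all f ∈ ℱ, then P( MCR₊(ε) < MCR̂₊(ε₃) − Q₃ ) ≤ δ and P( MCR₋(ε) > MCR̂₋(ε₃) + Q₃ ) ≤ δ, where ε₃ = ε − 2B_ref·√(log(4·𝒩(ℱ, r)/δ)/(2n)) − 2r and Q₃ = q(δ/2, r, n). -/

import Mathlib

open MeasureTheory

/-!
Written as an average over ordered pairs of observations, the switched risk has each observation in
at most a fraction `2 / n` of its summands. Finner's inequality (Hölder's inequality for overlapping
groups of independent variables) bounds the moment generating function of such an average by that of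
an average of `n / 2` independent summands, so Hoeffding's bound holds with `n / 2` in place of `n`.

Applying the defining property of a cover to the mixture of the population law and the empirical law
makes one and the same cover element close to a model for both, at the cost of a factor `2`; a union
bound over the cover then controls all models at once. For the excess losses over the reference
model, this shows that the empirical Rashomon set at level `ε₃` lies in the Rashomon set at level
`ε`; for the two risks, that empirical and population model reliance differ by at most `Q₃`. Either
bound can be violated only if one of these two properties fails.

The bounds of Assumption 3 hold almost surely for each model separately. Testing the covers against
point masses shows that the losses are totally bounded in the supremum norm, so that, outside one
null set, the bounds hold for all models simultaneously.
-/

namespace ModelClassReliance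

open ProbabilityTheory Finset
open scoped ENNReal NNReal BigOperators

section Finner

variable {κ : Type*}

lemma lintegral_prod_rpow_le {Ω : Type*} [MeasurableSpace Ω] {μ : Measure Ω}
    [IsProbabilityMeasure μ] (s : Finset κ) {u : κ → Ω → ℝ≥0∞} (hu : ∀ k, Measurable (u k))
    {w : κ → ℝ} (hw : ∀ k, 0 ≤ w k) (hws : ∑ k ∈ s, w k ≤ 1) :
    ∫⁻ a, ∏ k ∈ s, u k a ^ w k ∂μ ≤ ∏ k ∈ s, (∫⁻ a, u k a ∂μ) ^ w k := by
  simpa using ENNReal.lintegral_mul_prod_norm_pow_le (μ := μ) s (g := fun _ => 1)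
    aemeasurable_const (fun k _ => (hu k).aemeasurable) (1 - ∑ k ∈ s, w k) (by ring)
    (sub_nonneg.2 hws) fun k _ => hw k

variable [Fintype κ]

lemma lintegral_prod_rpow_le_of_eq_const {Ω : Type*} [MeasurableSpace Ω] {μ : Measure Ω}
    [IsProbabilityMeasure μ] (s : Finset κ) {u : κ → Ω → ℝ≥0∞} (hu : ∀ k, Measurable (u k))
    {c : κ → ℝ≥0∞} (hc : ∀ k ∉ s, ∀ a, u k a = c k)
    {w : κ → ℝ} (hw : ∀ k, 0 ≤ w k) (hws : ∑ k ∈ s, w k ≤ 1) :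
    ∫⁻ a, ∏ k, u k a ^ w k ∂μ ≤ ∏ k, (∫⁻ a, u k a ∂μ) ^ w k := by
  classical
  have off_s : ∀ k ∈ sᶜ, ∫⁻ a, u k a ∂μ = c k := fun k hk => by
    simp [hc k (mem_compl.1 hk)]
  calc ∫⁻ a, ∏ k, u k a ^ w k ∂μ
      = ∫⁻ a, (∏ k ∈ s, u k a ^ w k) * ∏ k ∈ sᶜ, c k ^ w k ∂μ := by
        refine lintegral_congr fun a => ?_
        rw [← prod_mul_prod_compl s]
        exact congrArg _ <| prod_congr rfl fun k hk => by rw [hc k (mem_compl.1 hk) a]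
    _ = (∫⁻ a, ∏ k ∈ s, u k a ^ w k ∂μ) * ∏ k ∈ sᶜ, c k ^ w k :=
        lintegral_mul_const _ (by fun_prop)
    _ ≤ (∏ k ∈ s, (∫⁻ a, u k a ∂μ) ^ w k) * ∏ k ∈ sᶜ, (∫⁻ a, u k a ∂μ) ^ w k := by
        gcongr with k hk
        · exact lintegral_prod_rpow_le s hu hw hws
        · exact hw k
        · exact (off_s k hk).ge
    _ = ∏ k, (∫⁻ a, u k a ∂μ) ^ w k := prod_mul_prod_compl _ _

variable {ι : Type*} [DecidableEq ι] {α : ι → Type*} [∀ i, MeasurableSpace (α i)]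
  {μ : ∀ i, Measure (α i)}

lemma dependsOn_lmarginal {f : (∀ i, α i) → ℝ≥0∞} {S : Set ι} (hf : DependsOn f S)
    (s : Finset ι) : DependsOn (∫⋯∫⁻_s, f ∂μ) S := by
  intro x y hxy
  refine lintegral_congr fun t => hf fun i hi => ?_
  by_cases his : i ∈ s <;> simp [Function.updateFinset, his, hxy i hi]

variable [∀ i, IsProbabilityMeasure (μ i)] {f : κ → (∀ i, α i) → ℝ≥0∞} {S : κ → Finset ι}
  {w : κ → ℝ}

lemma lmarginal_prod_rpow_le (hf : ∀ k, Measurable (f k)) (hfS : ∀ k, DependsOn (f k) (S k))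
    (hw : ∀ k, 0 ≤ w k) (hwS : ∀ i, ∑ k with i ∈ S k, w k ≤ 1) (s : Finset ι) (x : ∀ i, α i) :
    (∫⋯∫⁻_s, (fun y => ∏ k, f k y ^ w k) ∂μ) x ≤ ∏ k, (∫⋯∫⁻_s, f k ∂μ) x ^ w k := by
  induction s using Finset.induction_on generalizing x with
  | empty => simp
  | insert i s hi ih =>
    have not_dependsOn_coord : ∀ k ∉ ({k | i ∈ S k} : Finset κ), ∀ t,
        (∫⋯∫⁻_s, f k ∂μ) (Function.update x i t) = (∫⋯∫⁻_s, f k ∂μ) x := by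
      intro k hk t
      refine dependsOn_lmarginal (hfS k) s fun j hj => Function.update_of_ne ?_ _ _
      rintro rfl
      exact hk (by simpa using hj)
    simp only [lmarginal_insert _ (hf _) hi]
    rw [lmarginal_insert _ (by fun_prop) hi]
    exact (lintegral_mono fun t => ih _).trans <| lintegral_prod_rpow_le_of_eq_const _
      (fun k => ((hf k).lmarginal μ).comp (measurable_update x)) not_dependsOn_coord hw (hwS i)

theorem lintegral_pi_prod_rpow_le [Fintype ι] (hf : ∀ k, Measurable (f k))
    (hfS : ∀ k, DependsOn (f k) (S k)) (hw : ∀ k, 0 ≤ w k)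
    (hwS : ∀ i, ∑ k with i ∈ S k, w k ≤ 1) :
    ∫⁻ x, ∏ k, f k x ^ w k ∂Measure.pi μ ≤ ∏ k, (∫⁻ x, f k x ∂Measure.pi μ) ^ w k := by
  obtain ⟨x⟩ : Nonempty (∀ i, α i) := (Measure.pi μ).nonempty_of_neZero
  simp only [lintegral_eq_lmarginal_univ x]
  exact lmarginal_prod_rpow_le hf hfS hw hwS univ x

end Finner

section SubgaussianSums

variable {κ ι : Type*} [Fintype κ] [DecidableEq ι] [Fintype ι] {α : ι → Type*}
  [∀ i, MeasurableSpace (α i)] {μ : ∀ i, Measure (α i)} [∀ i, IsProbabilityMeasure (μ i)]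
  {X : κ → (∀ i, α i) → ℝ} {c : κ → ℝ≥0} {S : κ → Finset ι} {w : κ → ℝ≥0}

lemma hasSubgaussianMGF_of_lintegral_exp_le {Ω : Type*} [MeasurableSpace Ω] {P : Measure Ω}
    {Y : Ω → ℝ} {c : ℝ≥0} (hY : Measurable Y)
    (h : ∀ t, ∫⁻ ω, ENNReal.ofReal (Real.exp (t * Y ω)) ∂P
      ≤ ENNReal.ofReal (Real.exp (c * t ^ 2 / 2))) :
    HasSubgaussianMGF Y c P where
  integrable_exp_mul t := by
    refine ⟨by fun_prop, ?_⟩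
    rw [hasFiniteIntegral_iff_ofReal (ae_of_all _ fun _ => Real.exp_nonneg _)]
    exact (h t).trans_lt ENNReal.ofReal_lt_top
  mgf_le t := by
    rw [mgf, integral_eq_lintegral_of_nonneg_ae (ae_of_all _ fun _ => Real.exp_nonneg _)
      (by fun_prop)]
    exact ENNReal.toReal_le_of_le_ofReal (Real.exp_nonneg _) (h t)

lemma lintegral_exp_le_of_hasSubgaussianMGF {Ω : Type*} [MeasurableSpace Ω] {P : Measure Ω}
    {Y : Ω → ℝ} {c : ℝ≥0} (h : HasSubgaussianMGF Y c P) (t : ℝ) :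
    ∫⁻ ω, ENNReal.ofReal (Real.exp (t * Y ω)) ∂P ≤ ENNReal.ofReal (Real.exp (c * t ^ 2 / 2)) := by
  rw [← ofReal_integral_eq_lintegral_ofReal (h.integrable_exp_mul t)
    (ae_of_all _ fun _ => Real.exp_nonneg _)]
  exact ENNReal.ofReal_le_ofReal (h.mgf_le t)

theorem hasSubgaussianMGF_sum_mul_of_dependsOn (hX : ∀ k, Measurable (X k))
    (hXS : ∀ k, DependsOn (X k) (S k)) (hwS : ∀ i, ∑ k with i ∈ S k, w k ≤ 1)
    (hXc : ∀ k, HasSubgaussianMGF (X k) (c k) (Measure.pi μ)) :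
    HasSubgaussianMGF (fun x => ∑ k, w k * X k x) (∑ k, w k * c k) (Measure.pi μ) := by
  refine hasSubgaussianMGF_of_lintegral_exp_le (by fun_prop) fun t => ?_
  calc ∫⁻ x, ENNReal.ofReal (Real.exp (t * ∑ k, w k * X k x)) ∂Measure.pi μ
      = ∫⁻ x, ∏ k, ENNReal.ofReal (Real.exp (t * X k x)) ^ (w k : ℝ) ∂Measure.pi μ := by
        refine lintegral_congr fun x => ?_
        simp only [ENNReal.ofReal_rpow_of_pos (Real.exp_pos _), ← Real.exp_mul,
          ← ENNReal.ofReal_prod_of_nonneg fun _ _ => Real.exp_nonneg _, ← Real.exp_sum, mul_sum]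
        congr! 3
        ring
    _ ≤ ∏ k, (∫⁻ x, ENNReal.ofReal (Real.exp (t * X k x)) ∂Measure.pi μ) ^ (w k : ℝ) :=
        lintegral_pi_prod_rpow_le (fun k => by fun_prop)
          (fun k x y hxy => by rw [hXS k hxy]) (fun k => (w k).2) fun i => mod_cast hwS i
    _ ≤ ∏ k, ENNReal.ofReal (Real.exp (c k * t ^ 2 / 2)) ^ (w k : ℝ) := by
        gcongr with k
        exact lintegral_exp_le_of_hasSubgaussianMGF (hXc k) t
    _ = ENNReal.ofReal (Real.exp ((∑ k, w k * c k : ℝ≥0) * t ^ 2 / 2)) := by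
        simp only [ENNReal.ofReal_rpow_of_pos (Real.exp_pos _), ← Real.exp_mul,
          ← ENNReal.ofReal_prod_of_nonneg fun _ _ => Real.exp_nonneg _, ← Real.exp_sum]
        push_cast
        rw [sum_mul, sum_div]
        congr! 3
        ring

end SubgaussianSums

section TailBounds

variable {Ω : Type*} [MeasurableSpace Ω] {P : Measure Ω} [IsProbabilityMeasure P] {X : Ω → ℝ}
  {c : ℝ≥0}

lemma measure_sqrt_log_lt_le_of_hasSubgaussianMGF (hX : HasSubgaussianMGF X c P) {η : ℝ}
    (hη : 0 < η) : P {ω | √(2 * c * Real.log (1 / η)) < X ω} ≤ ENNReal.ofReal η := by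
  rcases le_total 1 η with one_le | le_one
  · exact prob_le_one.trans (ENNReal.one_le_ofReal.2 one_le)
  rcases eq_or_ne c 0 with rfl | hc
  · have null : P {ω | √(2 * (0 : ℝ≥0) * Real.log (1 / η)) < X ω} = 0 := by
      refine measure_mono_null ?_ hX.ae_eq_zero_of_hasSubgaussianMGF_zero
      intro ω (hω : √_ < X ω) (h_zero : X ω = 0)
      simp [h_zero] at hω
    exact null.le.trans zero_le
  have log_nonneg : 0 ≤ Real.log (1 / η) := Real.log_nonneg ((one_le_div hη).2 le_one)
  have exp_eq : Real.exp (-√(2 * c * Real.log (1 / η)) ^ 2 / (2 * c)) = η := by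
    rw [Real.sq_sqrt (by positivity), neg_div, mul_div_cancel_left₀ _ (by positivity), one_div,
      Real.log_inv, neg_neg, Real.exp_log hη]
  calc P {ω | √(2 * c * Real.log (1 / η)) < X ω}
      ≤ P {ω | √(2 * c * Real.log (1 / η)) ≤ X ω} :=
        measure_mono fun ω (hω : _ < X ω) => show _ ≤ X ω from hω.le
    _ = ENNReal.ofReal (P.real {ω | √(2 * c * Real.log (1 / η)) ≤ X ω}) :=
        (ofReal_measureReal).symm
    _ ≤ ENNReal.ofReal η :=
        ENNReal.ofReal_le_ofReal ((hX.measure_ge_le (Real.sqrt_nonneg _)).trans_eq exp_eq)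

lemma measure_sqrt_log_lt_abs_le_of_hasSubgaussianMGF (hX : HasSubgaussianMGF X c P) {η : ℝ}
    (hη : 0 < η) : P {ω | √(2 * c * Real.log (2 / η)) < |X ω|} ≤ ENNReal.ofReal η := by
  have one_sided {Y : Ω → ℝ} (hY : HasSubgaussianMGF Y c P) :
      P {ω | √(2 * c * Real.log (2 / η)) < Y ω} ≤ ENNReal.ofReal (η / 2) := by
    simpa using measure_sqrt_log_lt_le_of_hasSubgaussianMGF hY (half_pos hη)
  calc P {ω | √(2 * c * Real.log (2 / η)) < |X ω|}
      ≤ P ({ω | √(2 * c * Real.log (2 / η)) < X ω} ∪ {ω | √(2 * c * Real.log (2 / η)) < (-X) ω}) :=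
        measure_mono fun ω (hω : _ < |X ω|) => lt_abs.1 hω
    _ ≤ ENNReal.ofReal (η / 2) + ENNReal.ofReal (η / 2) :=
        (measure_union_le _ _).trans (add_le_add (one_sided hX) (one_sided hX.neg))
    _ = ENNReal.ofReal η := by
        rw [← ENNReal.ofReal_add (half_pos hη).le (half_pos hη).le, add_halves]

end TailBounds

section OverlappingSamples

variable {ι κ β : Type*} [Fintype ι] [Fintype κ] {α : ι → Type*}
  [∀ i, MeasurableSpace (α i)] [MeasurableSpace β]

lemma measurePreserving_eval_pair (lam : Measure β) [IsProbabilityMeasure lam] {i j : ι}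
    (hij : i ≠ j) : MeasurePreserving (fun x : ι → β => (x i, x j))
      (Measure.pi fun _ => lam) (lam.prod lam) where
  measurable := by fun_prop
  map_eq := by
    have indep : IndepFun (fun x : ι → β => x i) (fun x => x j) (Measure.pi fun _ => lam) :=
      (iIndepFun_pi (μ := fun _ : ι => lam) (X := fun _ => id)
        fun _ => aemeasurable_id).indepFun hij
    rw [(indepFun_iff_map_prod_eq_prod_map_map (measurable_pi_apply i).aemeasurable
      (measurable_pi_apply j).aemeasurable).1 indep,
      (measurePreserving_eval (fun _ : ι => lam) i).map_eq,
      (measurePreserving_eval (fun _ : ι => lam) j).map_eq]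

variable [DecidableEq ι]

/-- A family of statistics `p k` of independent coordinates, each of law `ν`, that overlap so little
that averages over `k` concentrate as if `m` of them were independent: no coordinate is read by more
than a fraction `1 / m` of the statistics (`m` plays the role of the inverse fractional chromatic
number in Janson's version of Hoeffding's inequality). -/
structure IsOverlappingSample (μ : ∀ i, Measure (α i)) (ν : Measure β)
    (p : κ → (∀ i, α i) → β) (m : ℝ≥0) : Prop where
  pos : 0 < m
  measurePreserving : ∀ k, MeasurePreserving (p k) (Measure.pi μ) ν
  exists_dependsOn : ∃ S : κ → Finset ι, (∀ k, DependsOn (p k) (S k)) ∧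
    ∀ i, m * #{k | i ∈ S k} ≤ Fintype.card κ

variable {μ : ∀ i, Measure (α i)} {ν : Measure β} {p : κ → (∀ i, α i) → β} {m : ℝ≥0}

lemma IsOverlappingSample.integral_comp (hp : IsOverlappingSample μ ν p m) (k : κ)
    {φ : β → ℝ} (hφ : Measurable φ) : ∫ x, φ (p k x) ∂Measure.pi μ = ∫ z, φ z ∂ν := by
  rw [← (hp.measurePreserving k).map_eq,
    integral_map (hp.measurePreserving k).measurable.aemeasurable hφ.aestronglyMeasurable]

lemma IsOverlappingSample.map {γ : Type*} [MeasurableSpace γ] (hp : IsOverlappingSample μ ν p m)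
    {σ : β → γ} (hσ : Measurable σ) :
    IsOverlappingSample μ (ν.map σ) (fun k x => σ (p k x)) m where
  pos := hp.pos
  measurePreserving k := (hσ.measurePreserving ν).comp (hp.measurePreserving k)
  exists_dependsOn := by
    obtain ⟨S, hS, hSm⟩ := hp.exists_dependsOn
    exact ⟨S, fun k x y hxy => congrArg σ (hS k hxy), hSm⟩

lemma isOverlappingSample_eval [Nonempty ι] (lam : Measure β) [IsProbabilityMeasure lam] :
    IsOverlappingSample (fun _ : ι => lam) lam Function.eval (Fintype.card ι) where
  pos := mod_cast Fintype.card_pos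
  measurePreserving := measurePreserving_eval _
  exists_dependsOn := ⟨fun i => {i}, fun i x y hxy => hxy i (by simp), fun i => by
    simp [filter_eq]⟩

lemma card_filter_mem_pair_le (i : ι) :
    #{k : Σ i : ι, {j // j ≠ i} | i ∈ ({k.1, k.2.1} : Finset ι)} ≤ 2 * (Fintype.card ι - 1) := by
  have card_ne : #(univ : Finset {j // j ≠ i}) = Fintype.card ι - 1 := by
    simp
  let first : {j // j ≠ i} → Σ i : ι, {j // j ≠ i} := fun j => ⟨i, j⟩
  let second : {j // j ≠ i} → Σ i : ι, {j // j ≠ i} := fun j => ⟨j, ⟨i, j.2.symm⟩⟩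
  have subset_union : ({k : Σ i : ι, {j // j ≠ i} | i ∈ ({k.1, k.2.1} : Finset ι)} : Finset _) ⊆
      univ.image first ∪ univ.image second := by
    rintro ⟨a, b, hab⟩ hi
    obtain rfl | rfl : i = a ∨ i = b := by simpa using hi
    · exact mem_union_left _ (mem_image.2 ⟨⟨b, hab⟩, mem_univ _, rfl⟩)
    · exact mem_union_right _ (mem_image.2 ⟨⟨a, hab.symm⟩, mem_univ _, rfl⟩)
  calc _ ≤ #(univ.image first ∪ univ.image second) := card_le_card subset_union
    _ ≤ #(univ.image first) + #(univ.image second) := card_union_le _ _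
    _ ≤ 2 * (Fintype.card ι - 1) := by
        rw [two_mul, ← card_ne]
        exact add_le_add card_image_le card_image_le

lemma isOverlappingSample_eval_pair [Nonempty ι] (lam : Measure β) [IsProbabilityMeasure lam] :
    IsOverlappingSample (fun _ : ι => lam) (lam.prod lam)
      (fun (k : Σ i : ι, {j // j ≠ i}) x => (x k.1, x k.2.1)) (Fintype.card ι / 2) where
  pos := half_pos (mod_cast Fintype.card_pos)
  measurePreserving k := measurePreserving_eval_pair lam k.2.2.symm
  exists_dependsOn := by
    refine ⟨fun k => {k.1, k.2.1}, fun k x y hxy => ?_, fun i => ?_⟩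
    · simp [hxy k.1, hxy k.2.1]
    · calc (Fintype.card ι / 2 : ℝ≥0) *
            #{k : Σ i : ι, {j // j ≠ i} | i ∈ ({k.1, k.2.1} : Finset ι)}
          ≤ Fintype.card ι / 2 * (2 * (Fintype.card ι - 1) : ℕ) := by
            gcongr
            exact card_filter_mem_pair_le i
        _ = (Fintype.card (Σ i : ι, {j // j ≠ i}) : ℕ) := by
            simp [Fintype.card_sigma]
            ring

variable [Nonempty κ] [∀ i, IsProbabilityMeasure (μ i)]

theorem IsOverlappingSample.hasSubgaussianMGF (hp : IsOverlappingSample μ ν p m) {φ : β → ℝ}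
    (hφ : Measurable φ) {a b : ℝ} (hab : ∀ z, φ z ∈ Set.Icc a b) :
    HasSubgaussianMGF (fun x => 𝔼 k, φ (p k x) - ∫ z, φ z ∂ν) ((‖b - a‖₊ / 2) ^ 2 / m)
      (Measure.pi μ) := by
  obtain ⟨S, hS, hSm⟩ := hp.exists_dependsOn
  have hφp k : Measurable fun x => φ (p k x) := hφ.comp (hp.measurePreserving k).measurable
  have summand k : HasSubgaussianMGF (fun x => φ (p k x) - ∫ z, φ z ∂ν) ((‖b - a‖₊ / 2) ^ 2)
      (Measure.pi μ) := by
    rw [← hp.integral_comp k hφ]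
    exact hasSubgaussianMGF_of_mem_Icc (hφp k).aemeasurable (ae_of_all _ fun x => hab (p k x))
  have card_pos : (0 : ℝ≥0) < Fintype.card κ := mod_cast Fintype.card_pos
  have weight_le (i : ι) : ∑ k with i ∈ S k, m / Fintype.card κ ≤ 1 := by
    rw [sum_const, nsmul_eq_mul, mul_div_assoc', div_le_one card_pos, mul_comm]
    exact hSm i
  have weighted := (hasSubgaussianMGF_sum_mul_of_dependsOn (fun k => (hφp k).sub_const _)
    (fun k x y hxy => by rw [hS k hxy]) weight_le summand).const_mul (m : ℝ)⁻¹
  have hm : (m : ℝ) ≠ 0 := mod_cast hp.pos.ne'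
  convert! weighted using 1
  · ext x
    rw [Fintype.expect_eq_sum_div_card, ← mul_sum, sum_sub_distrib]
    simp
    field_simp
  · ext
    change _ = (m : ℝ)⁻¹ ^ 2 * ((∑ k : κ, m / Fintype.card κ * (‖b - a‖₊ / 2) ^ 2 : ℝ≥0) : ℝ)
    simp
    field_simp

theorem IsOverlappingSample.measure_lt_abs_le (hp : IsOverlappingSample μ ν p m) {φ : β → ℝ}
    (hφ : Measurable φ) {a b : ℝ} (hab : ∀ z, φ z ∈ Set.Icc a b) {η : ℝ} (hη : 0 < η) :
    Measure.pi μ {x | (b - a) * √(Real.log (2 / η) / (2 * m)) <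
      |𝔼 k, φ (p k x) - ∫ z, φ z ∂ν|} ≤ ENNReal.ofReal η := by
  obtain ⟨x⟩ : Nonempty (∀ i, α i) := (Measure.pi μ).nonempty_of_neZero
  have hab_le : a ≤ b := (hab (p (Classical.arbitrary κ) x)).1.trans (hab _).2
  convert! measure_sqrt_log_lt_abs_le_of_hasSubgaussianMGF (hp.hasSubgaussianMGF hφ hab) hη
    using 5
  nth_rw 1 [← Real.sqrt_sq (sub_nonneg.2 hab_le)]
  rw [← Real.sqrt_mul (sq_nonneg _)]
  congr 1
  push_cast
  rw [Real.norm_eq_abs, div_pow, sq_abs]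
  ring

end OverlappingSamples

section Covers

variable {Φ Γ β κ Ω : Type*} [MeasurableSpace β]

/-- The expected loss of `f` under the law `ν`. -/
noncomputable def risk (ℓ : Φ → β → ℝ) (ν : Measure β) (f : Φ) : ℝ := ∫ z, ℓ f z ∂ν

/-- The average loss of `f` over the observations `p k ω`. -/
noncomputable def empiricalRisk [Fintype κ] (ℓ : Φ → β → ℝ) (p : κ → Ω → β) (f : Φ) (ω : Ω) : ℝ :=
  𝔼 k, ℓ f (p k ω)

/-- On the class `F`, the loss `ℓ` is measurable with values in `[a, b]`. -/
structure IsBoundedLoss (ℓ : Φ → β → ℝ) (F : Set Φ) (a b : ℝ) : Prop where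
  measurable : ∀ f ∈ F, Measurable (ℓ f)
  mem_Icc : ∀ f ∈ F, ∀ z, ℓ f z ∈ Set.Icc a b

/-- A margin-expectation-cover of radius `s`: in the `L¹` distance of any probability measure, each
loss `ℓ f`, `f ∈ F`, is within `s` of some `ψ g`, `g ∈ G`. The approximants are indexed separately,
so that they can be modified losses (such as clamped ones). -/
structure IsExpectationCover (ℓ : Φ → β → ℝ) (F : Set Φ) (ψ : Γ → β → ℝ) (G : Finset Γ)
    (a b s : ℝ) : Prop where
  isBoundedLoss : IsBoundedLoss ψ G a b
  exists_integral_le : ∀ f ∈ F, ∀ ν : Measure β, IsProbabilityMeasure ν →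
    ∃ g ∈ G, ∫ z, |ℓ f z - ψ g z| ∂ν ≤ s

variable {ℓ : Φ → β → ℝ} {F : Set Φ} {ψ : Γ → β → ℝ} {G : Finset Γ} {a b a' b' s : ℝ} {f : Φ}
  {g : Γ}

lemma IsBoundedLoss.integrable (hℓ : IsBoundedLoss ℓ F a b) (hf : f ∈ F) (ν : Measure β)
    [IsFiniteMeasure ν] : Integrable (ℓ f) ν :=
  .of_mem_Icc a b (hℓ.measurable f hf).aemeasurable (ae_of_all _ (hℓ.mem_Icc f hf))

lemma IsExpectationCover.integrable_abs_sub (hG : IsExpectationCover ℓ F ψ G a b s)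
    (hℓ : IsBoundedLoss ℓ F a' b') (hf : f ∈ F) (hg : g ∈ G) (ν : Measure β) [IsFiniteMeasure ν] :
    Integrable (fun z => |ℓ f z - ψ g z|) ν :=
  ((hℓ.integrable hf ν).sub (hG.isBoundedLoss.integrable hg ν)).abs

lemma IsExpectationCover.exists_integral_add_integral_le (hG : IsExpectationCover ℓ F ψ G a b s)
    (hℓ : IsBoundedLoss ℓ F a' b') (hf : f ∈ F) (ν₁ ν₂ : Measure β) [IsProbabilityMeasure ν₁]
    [IsProbabilityMeasure ν₂] :
    ∃ g ∈ G, ∫ z, |ℓ f z - ψ g z| ∂ν₁ + ∫ z, |ℓ f z - ψ g z| ∂ν₂ ≤ 2 * s := by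
  have mixture : IsProbabilityMeasure ((2⁻¹ : ℝ≥0) • ν₁ + (2⁻¹ : ℝ≥0) • ν₂) :=
    ⟨by simp [ENNReal.smul_def, ENNReal.inv_two_add_inv_two]⟩
  obtain ⟨g, hg, hle⟩ := hG.exists_integral_le f hf _ mixture
  rw [integral_add_measure (hG.integrable_abs_sub hℓ hf hg _) (hG.integrable_abs_sub hℓ hf hg _),
    integral_smul_nnreal_measure, integral_smul_nnreal_measure] at hle
  simp only [NNReal.smul_def, NNReal.coe_inv, NNReal.coe_ofNat, smul_eq_mul] at hle
  exact ⟨g, hg, by linarith⟩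

lemma exists_isProbabilityMeasure_integral_eq_expect [Fintype κ] [Nonempty κ] (q : κ → β) :
    ∃ ν : Measure β, IsProbabilityMeasure ν ∧
      ∀ φ : β → ℝ, Measurable φ → ∫ z, φ z ∂ν = 𝔼 k, φ (q k) := by
  refine ⟨(Fintype.card κ : ℝ≥0)⁻¹ • ∑ k, Measure.dirac (q k), ⟨?_⟩, fun φ hφ => ?_⟩
  · simp only [Measure.smul_apply, Measure.finsetSum_apply, measure_univ, sum_const, card_univ,
      nsmul_eq_mul, mul_one, ENNReal.smul_def, smul_eq_mul]
    norm_cast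
    simp
  · rw [integral_smul_nnreal_measure, integral_finsetSum_measure fun k _ =>
      integrable_dirac' hφ.stronglyMeasurable (by simp)]
    simp [integral_dirac' _ _ hφ.stronglyMeasurable, Fintype.expect_eq_sum_div_card,
      NNReal.smul_def, div_eq_inv_mul]

lemma IsExpectationCover.exists_integral_add_expect_le (hG : IsExpectationCover ℓ F ψ G a b s)
    (hℓ : IsBoundedLoss ℓ F a' b') (hf : f ∈ F) (ν : Measure β) [IsProbabilityMeasure ν]
    [Fintype κ] [Nonempty κ] (q : κ → β) :
    ∃ g ∈ G, ∫ z, |ℓ f z - ψ g z| ∂ν + 𝔼 k, |ℓ f (q k) - ψ g (q k)| ≤ 2 * s := by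
  obtain ⟨ν', _, hν'⟩ := exists_isProbabilityMeasure_integral_eq_expect q
  obtain ⟨g, hg, hle⟩ := hG.exists_integral_add_integral_le hℓ hf ν ν'
  have measurable_abs_sub : Measurable fun z => |ℓ f z - ψ g z| :=
    ((hℓ.measurable f hf).sub (hG.isBoundedLoss.measurable g hg)).abs
  exact ⟨g, hg, hν' _ measurable_abs_sub ▸ hle⟩

lemma IsExpectationCover.exists_abs_empiricalRisk_sub_risk_le
    (hG : IsExpectationCover ℓ F ψ G a b s) (hℓ : IsBoundedLoss ℓ F a' b') (hf : f ∈ F)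
    (ν : Measure β) [IsProbabilityMeasure ν] [Fintype κ] [Nonempty κ] (p : κ → Ω → β) (ω : Ω) :
    ∃ g ∈ G, |empiricalRisk ℓ p f ω - risk ℓ ν f| ≤
      |empiricalRisk ψ p g ω - risk ψ ν g| + 2 * s := by
  obtain ⟨g, hg, hle⟩ := hG.exists_integral_add_expect_le hℓ hf ν fun k => p k ω
  have risk_close : |risk ℓ ν f - risk ψ ν g| ≤ ∫ z, |ℓ f z - ψ g z| ∂ν := by
    rw [risk, risk, ← integral_sub (hℓ.integrable hf ν) (hG.isBoundedLoss.integrable hg ν)]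
    exact abs_integral_le_integral_abs
  have empiricalRisk_close :
      |empiricalRisk ℓ p f ω - empiricalRisk ψ p g ω| ≤ 𝔼 k, |ℓ f (p k ω) - ψ g (p k ω)| := by
    rw [empiricalRisk, empiricalRisk, ← expect_sub_distrib]
    exact abs_expect_le _ _
  refine ⟨g, hg, ?_⟩
  rw [abs_le] at risk_close empiricalRisk_close ⊢
  constructor <;> cases abs_cases (empiricalRisk ψ p g ω - risk ψ ν g) <;> linarith

variable {ι : Type*} [Fintype ι] [Fintype κ] [Nonempty κ] [DecidableEq ι] {α : ι → Type*}
  [∀ i, MeasurableSpace (α i)] {μ : ∀ i, Measure (α i)} [∀ i, IsProbabilityMeasure (μ i)]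
  {ν : Measure β} [IsProbabilityMeasure ν] {p : κ → (∀ i, α i) → β} {m : ℝ≥0}

/-- The radius of a simultaneous confidence band, at level `1 - δ` and effective sample size `m`,
for the risks of a class that is covered at radius `s` by `N` losses with values in an interval of
length `w`. -/
noncomputable def deviationBound (w : ℝ) (N : ℕ) (δ m s : ℝ) : ℝ :=
  w * √(Real.log (2 * N / δ) / (2 * m)) + 2 * s

lemma deviationBound_half (w : ℝ) (N : ℕ) (δ m s : ℝ) :
    deviationBound w N (δ / 2) m s = w * √(Real.log (4 * N / δ) / (2 * m)) + 2 * s := by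
  rw [deviationBound, div_div_eq_mul_div]
  ring_nf

theorem IsExpectationCover.measure_exists_lt_abs_empiricalRisk_sub_risk_le
    (hG : IsExpectationCover ℓ F ψ G a b s) (hℓ : IsBoundedLoss ℓ F a' b')
    (hp : IsOverlappingSample μ ν p m) {δ : ℝ} (hδ : 0 < δ) :
    Measure.pi μ {x | ∃ f ∈ F, deviationBound (b - a) #G δ m s <
      |empiricalRisk ℓ p f x - risk ℓ ν f|} ≤ ENNReal.ofReal δ := by
  set η := (b - a) * √(Real.log (2 * #G / δ) / (2 * m))
  have fixed_g (g : Γ) (hg : g ∈ G) : Measure.pi μ {x | η < |empiricalRisk ψ p g x - risk ψ ν g|} ≤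
      ENNReal.ofReal (δ / #G) := by
    have card_pos : (0 : ℝ) < #G := mod_cast card_pos.2 ⟨g, hg⟩
    have := hp.measure_lt_abs_le (hG.isBoundedLoss.measurable g hg) (hG.isBoundedLoss.mem_Icc g hg)
      (div_pos hδ card_pos)
    rwa [div_div_eq_mul_div] at this
  calc _ ≤ Measure.pi μ (⋃ g ∈ G, {x | η < |empiricalRisk ψ p g x - risk ψ ν g|}) := by
        refine measure_mono ?_
        rintro x ⟨f, hf, hlt⟩
        obtain ⟨g, hg, hle⟩ := hG.exists_abs_empiricalRisk_sub_risk_le hℓ hf ν p x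
        have : deviationBound (b - a) #G δ m s = η + 2 * s := rfl
        exact Set.mem_biUnion hg (show η < _ by linarith)
    _ ≤ ∑ _g ∈ G, ENNReal.ofReal (δ / #G) :=
        (measure_biUnion_finset_le _ _).trans (sum_le_sum fixed_g)
    _ ≤ ENNReal.ofReal δ := by
        rw [← ENNReal.ofReal_sum_of_nonneg fun _ _ => by positivity, sum_const, nsmul_eq_mul]
        refine ENNReal.ofReal_le_ofReal ?_
        rw [mul_div_left_comm]
        exact mul_le_of_le_one_right hδ.le (div_self_le_one _)

end Covers

section AlmostSureConstraints

lemma exists_finite_net_of_mem_Icc {Φ ι : Type*} [Finite ι] {F : Set Φ} {v : Φ → ι → ℝ} {a b : ℝ}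
    (hv : ∀ f ∈ F, ∀ i, v f i ∈ Set.Icc a b) {τ : ℝ} (hτ : 0 < τ) :
    ∃ T ⊆ F, T.Finite ∧ ∀ f ∈ F, ∃ f' ∈ T, ∀ i, |v f i - v f' i| ≤ τ := by
  have := Fintype.ofFinite ι
  have totallyBounded : TotallyBounded (v '' F) :=
    (isCompact_univ_pi fun _ : ι => isCompact_Icc (a := a) (b := b)).totallyBounded.subset <| by
      rintro _ ⟨f, hf, rfl⟩ i -
      exact hv f hf i
  obtain ⟨T, hTF, hT, hcover⟩ := Set.exists_subset_image_finite_and.1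
    (Metric.finite_approx_of_totallyBounded totallyBounded τ hτ)
  refine ⟨T, hTF, hT, fun f hf => ?_⟩
  obtain ⟨f', hf', hdist⟩ : ∃ f' ∈ T, dist (v f) (v f') < τ := by
    simpa using hcover (Set.mem_image_of_mem v hf)
  exact ⟨f', hf', fun i => (dist_le_pi_dist (v f) (v f') i).trans hdist.le⟩

lemma abs_empiricalRisk_sub_empiricalRisk_le {Φ β κ Ω : Type*} [Fintype κ] [Nonempty κ]
    {ℓ : Φ → β → ℝ} {f f' : Φ} {τ : ℝ} (h : ∀ z, |ℓ f z - ℓ f' z| ≤ τ) (p : κ → Ω → β) (ω : Ω) :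
    |empiricalRisk ℓ p f ω - empiricalRisk ℓ p f' ω| ≤ τ := by
  rw [empiricalRisk, empiricalRisk, ← expect_sub_distrib]
  exact (abs_expect_le _ _).trans (expect_le univ_nonempty fun k _ => h _)

variable {Φ Γ β κ Ω : Type*} [MeasurableSpace β] {ℓ : Φ → β → ℝ} {F : Set Φ} {ψ : Γ → β → ℝ}
  {a b a' b' s : ℝ}

lemma IsExpectationCover.abs_sub_le_of_forall_abs_sub_le {G : Finset Γ} {τ : ℝ} {f : Φ} {z z' : β}
    (hG : IsExpectationCover ℓ F ψ G a b s) (hℓ : IsBoundedLoss ℓ F a' b') (hf : f ∈ F)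
    (hz : ∀ g ∈ G, |ψ g z - ψ g z'| ≤ τ) : |ℓ f z - ℓ f z'| ≤ 2 * s + τ := by
  obtain ⟨g, hg, hle⟩ := hG.exists_integral_add_integral_le hℓ hf (.dirac z) (.dirac z')
  have measurable_abs_sub : Measurable fun z => |ℓ f z - ψ g z| :=
    ((hℓ.measurable f hf).sub (hG.isBoundedLoss.measurable g hg)).abs
  rw [integral_dirac' _ _ measurable_abs_sub.stronglyMeasurable,
    integral_dirac' _ _ measurable_abs_sub.stronglyMeasurable] at hle
  calc |ℓ f z - ℓ f z'| ≤ |ℓ f z - ψ g z| + |ψ g z - ℓ f z'| := abs_sub_le _ _ _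
    _ ≤ |ℓ f z - ψ g z| + (|ψ g z - ψ g z'| + |ψ g z' - ℓ f z'|) := by
        gcongr
        exact abs_sub_le _ _ _
    _ ≤ 2 * s + τ := by
        rw [abs_sub_comm (ψ g z')]
        linarith [hz g hg]

lemma exists_finite_uniform_net_of_isExpectationCover
    (hcov : ∀ s > 0, ∃ G, IsExpectationCover ℓ F ψ G a b s) (hℓ : IsBoundedLoss ℓ F a' b') {τ : ℝ}
    (hτ : 0 < τ) : ∃ T ⊆ F, T.Finite ∧ ∀ f ∈ F, ∃ f' ∈ T, ∀ z, |ℓ f z - ℓ f' z| ≤ τ := by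
  obtain ⟨G, hG⟩ := hcov (τ / 7) (by positivity)
  obtain ⟨Z, -, hZ, hZ_net⟩ := exists_finite_net_of_mem_Icc (F := Set.univ)
    (v := fun z (g : G) => ψ g z) (fun z _ g => hG.isBoundedLoss.mem_Icc g g.2 z)
    (show 0 < τ / 7 by positivity)
  have := hZ.to_subtype
  obtain ⟨T, hTF, hT, hT_net⟩ := exists_finite_net_of_mem_Icc (F := F)
    (v := fun f (z : Z) => ℓ f z) (fun f hf z => hℓ.mem_Icc f hf z) (show 0 < τ / 7 by positivity)
  refine ⟨T, hTF, hT, fun f hf => ?_⟩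
  obtain ⟨f', hf', hff'⟩ := hT_net f hf
  refine ⟨f', hf', fun z => ?_⟩
  obtain ⟨z', hz', hzz'⟩ := hZ_net z trivial
  have oscillation {h : Φ} (hh : h ∈ F) : |ℓ h z - ℓ h z'| ≤ 2 * (τ / 7) + τ / 7 :=
    hG.abs_sub_le_of_forall_abs_sub_le hℓ hh fun g hg => hzz' ⟨g, hg⟩
  have f_osc := abs_le.1 (oscillation hf)
  have f'_osc := abs_le.1 (oscillation (hTF hf'))
  have at_z' := abs_le.1 (hff' ⟨z', hz'⟩)
  rw [abs_le]
  constructor <;> linarith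

variable [Fintype κ] {f : Φ}

theorem ae_forall_empiricalRisk_mem_of_isClosed [Nonempty κ] [MeasurableSpace Ω] {P : Measure Ω}
    (hcov : ∀ s > 0, ∃ G, IsExpectationCover ℓ F ψ G a b s) (hℓ : IsBoundedLoss ℓ F a' b')
    {C : Set ℝ} (hC : IsClosed C) {p : κ → Ω → β}
    (h : ∀ f ∈ F, ∀ᵐ ω ∂P, empiricalRisk ℓ p f ω ∈ C) :
    ∀ᵐ ω ∂P, ∀ f ∈ F, empiricalRisk ℓ p f ω ∈ C := by
  have net (j : ℕ) := exists_finite_uniform_net_of_isExpectationCover hcov hℓ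
    (Nat.one_div_pos_of_nat (α := ℝ) (n := j))
  choose T hTF hT hT_net using net
  have on_nets : ∀ᵐ ω ∂P, ∀ j, ∀ f ∈ T j, empiricalRisk ℓ p f ω ∈ C :=
    ae_all_iff.2 fun j => (ae_ball_iff (hT j).countable).2 fun f hf => h f (hTF j hf)
  filter_upwards [on_nets] with ω hω f hf
  rw [← hC.closure_eq, Metric.mem_closure_iff]
  intro τ hτ
  obtain ⟨j, hj⟩ := exists_nat_one_div_lt hτ
  obtain ⟨f', hf', hclose⟩ := hT_net j f hf
  exact ⟨_, hω j f' hf', (abs_empiricalRisk_sub_empiricalRisk_le hclose p ω).trans_lt hj⟩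

variable {ι : Type*} [Fintype ι] [DecidableEq ι] {α : ι → Type*} [∀ i, MeasurableSpace (α i)]
  {μ : ∀ i, Measure (α i)} [∀ i, IsProbabilityMeasure (μ i)] {ν : Measure β}
  {p : κ → (∀ i, α i) → β} {m : ℝ≥0}

lemma IsOverlappingSample.integrable_comp (hp : IsOverlappingSample μ ν p m)
    (hℓ : IsBoundedLoss ℓ F a b) (hf : f ∈ F) (k : κ) :
    Integrable (fun x => ℓ f (p k x)) (Measure.pi μ) :=
  .of_mem_Icc a b ((hℓ.measurable f hf).comp (hp.measurePreserving k).measurable).aemeasurable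
    (ae_of_all _ fun _ => hℓ.mem_Icc f hf _)

variable [Nonempty κ]

lemma IsOverlappingSample.integral_empiricalRisk (hp : IsOverlappingSample μ ν p m)
    (hℓ : IsBoundedLoss ℓ F a b) (hf : f ∈ F) :
    ∫ x, empiricalRisk ℓ p f x ∂Measure.pi μ = risk ℓ ν f := by
  simp only [empiricalRisk, Fintype.expect_eq_sum_div_card, risk]
  rw [integral_div, integral_finsetSum _ fun k _ => hp.integrable_comp hℓ hf k]
  simp [hp.integral_comp _ (hℓ.measurable f hf)]

lemma IsOverlappingSample.risk_mem_of_ae_empiricalRisk_mem (hp : IsOverlappingSample μ ν p m)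
    (hℓ : IsBoundedLoss ℓ F a b) (hf : f ∈ F) {C : Set ℝ} (hC_convex : Convex ℝ C)
    (hC : IsClosed C) (h : ∀ᵐ x ∂Measure.pi μ, empiricalRisk ℓ p f x ∈ C) : risk ℓ ν f ∈ C := by
  have integrable : Integrable (fun x => empiricalRisk ℓ p f x) (Measure.pi μ) := by
    simp only [empiricalRisk, Fintype.expect_eq_sum_div_card]
    exact (integrable_finsetSum _ fun k _ => hp.integrable_comp hℓ hf k).div_const _
  rw [← hp.integral_empiricalRisk hℓ hf]
  exact hC_convex.integral_mem hC h integrable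

end AlmostSureConstraints

section ModelReliance

lemma div_sub_div_le_of_sub_le {x y o p A C b B : ℝ} (hb : 0 < b) (hbo : b ≤ o) (hbp : b ≤ p)
    (hx : 0 ≤ x) (hy : y ∈ Set.Icc 0 B) (hC : 0 ≤ C) (hop : o - p ≤ C) (hyx : y - x ≤ A)
    (hA : 0 ≤ A) : y / p - x / o ≤ B / b - (B - A) / (b + C) := by
  have hp : 0 < p := hb.trans_le hbp
  have ho : 0 < o := hb.trans_le hbo
  have hB : 0 ≤ B := hy.1.trans hy.2
  calc y / p - x / o ≤ y / p - (y - A) / (p + C) := by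
        have : (y - A) / (p + C) ≤ x / (p + C) := by gcongr; linarith
        have : x / (p + C) ≤ x / o := by gcongr; linarith
        linarith
    _ = (y * C / p + A) / (p + C) := by field_simp; ring
    _ ≤ (B * C / b + A) / (b + C) := by
        gcongr
        exact hy.2
    _ = B / b - (B - A) / (b + C) := by field_simp; ring

lemma abs_div_sub_div_le_of_abs_sub_le {x y o p A C b B : ℝ} (hb : 0 < b) (hbo : b ≤ o)
    (hbp : b ≤ p) (hx : x ∈ Set.Icc 0 B) (hy : y ∈ Set.Icc 0 B) (hop : |o - p| ≤ C)
    (hxy : |x - y| ≤ A) : |x / o - y / p| ≤ B / b - (B - A) / (b + C) := by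
  have hC : 0 ≤ C := (abs_nonneg _).trans hop
  have hA : 0 ≤ A := (abs_nonneg _).trans hxy
  rw [abs_le] at hop hxy
  rw [abs_sub_le_iff]
  exact ⟨div_sub_div_le_of_sub_le hb hbp hbo hy.1 hx hC (by linarith) hxy.2 hA,
    div_sub_div_le_of_sub_le hb hbo hbp hx.1 hy hC hop.2 (by linarith) hA⟩

lemma measure_lt_sub_le_of_mem_image {Φ Ω : Type*} [MeasurableSpace Ω] (P : Measure Ω)
    {F T : Set Φ} {S : Ω → Set Φ} {u : Φ → Ω → ℝ} {v : Φ → ℝ} {M : Ω → ℝ} {c Q : ℝ} (hT : T ⊆ F)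
    (hM : ∀ ω, M ω ∈ (u · ω) '' S ω) (hc : ∀ f ∈ T, v f ≤ c) :
    P {ω | c < M ω - Q} ≤ P {ω | ¬ (S ω ⊆ T ∧ ∀ f ∈ F, |u f ω - v f| ≤ Q)} := by
  refine measure_mono fun ω (hω : c < M ω - Q) ⟨hST, hQ⟩ => ?_
  obtain ⟨f, hf, hfM⟩ := hM ω
  linarith [hc f (hST hf), (abs_le.1 (hQ f (hT (hST hf)))).2]

lemma measure_add_lt_le_of_mem_image {Φ Ω : Type*} [MeasurableSpace Ω] (P : Measure Ω)
    {F T : Set Φ} {S : Ω → Set Φ} {u : Φ → Ω → ℝ} {v : Φ → ℝ} {M : Ω → ℝ} {c Q : ℝ} (hT : T ⊆ F)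
    (hM : ∀ ω, M ω ∈ (u · ω) '' S ω) (hc : ∀ f ∈ T, c ≤ v f) :
    P {ω | M ω + Q < c} ≤ P {ω | ¬ (S ω ⊆ T ∧ ∀ f ∈ F, |u f ω - v f| ≤ Q)} := by
  refine measure_mono fun ω (hω : M ω + Q < c) ⟨hST, hQ⟩ => ?_
  obtain ⟨f, hf, hfM⟩ := hM ω
  linarith [hc f (hST hf), (abs_le.1 (hQ f (hT (hST hf)))).1]

/-- The models of `F` whose error `e` exceeds that of the reference model `f₀` by at most `ε`,
together with `f₀` itself (which matters when `ε < 0`). -/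
def rashomonSet {Φ : Type*} (F : Set Φ) (f₀ : Φ) (e : Φ → ℝ) (ε : ℝ) : Set Φ :=
  insert f₀ {f ∈ F | e f ≤ e f₀ + ε}

lemma rashomonSet_subset {Φ : Type*} {F : Set Φ} {f₀ : Φ} (hf₀ : f₀ ∈ F) (e : Φ → ℝ) (ε : ℝ) :
    rashomonSet F f₀ e ε ⊆ F :=
  Set.insert_subset hf₀ (Set.sep_subset _ _)

lemma rashomonSet_sub_subset_rashomonSet {Φ : Type*} {F : Set Φ} {f₀ : Φ} {e e' : Φ → ℝ} {η : ℝ}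
    (h : ∀ f ∈ F, |(e' f - e' f₀) - (e f - e f₀)| ≤ η) (ε : ℝ) :
    rashomonSet F f₀ e' (ε - η) ⊆ rashomonSet F f₀ e ε := by
  refine Set.insert_subset_insert fun f hf => ⟨hf.1, ?_⟩
  linarith [hf.2, (abs_le.1 (h f hf.1)).1]

lemma empiricalRisk_sub {Φ β κ Ω : Type*} [Fintype κ] (ℓ : Φ → β → ℝ) (p : κ → Ω → β) (f f₀ : Φ)
    (ω : Ω) : empiricalRisk (fun f z => ℓ f z - ℓ f₀ z) p f ω =
      empiricalRisk ℓ p f ω - empiricalRisk ℓ p f₀ ω :=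
  expect_sub_distrib _ _ _

variable {Φ Γ β : Type*} [MeasurableSpace β] {ℓ : Φ → β → ℝ} {F : Set Φ} {f₀ : Φ}
  {ψ : Γ → β → ℝ} {G : Finset Γ} {a b a' b' B B_ref r s : ℝ}

lemma IsBoundedLoss.risk_sub (hℓ : IsBoundedLoss ℓ F a b) {f : Φ} (hf : f ∈ F) (hf₀ : f₀ ∈ F)
    (ν : Measure β) [IsFiniteMeasure ν] :
    risk (fun f z => ℓ f z - ℓ f₀ z) ν f = risk ℓ ν f - risk ℓ ν f₀ :=
  integral_sub (hℓ.integrable hf ν) (hℓ.integrable hf₀ ν)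

lemma IsBoundedLoss.sub (hℓ : IsBoundedLoss ℓ F a' b') (hf₀ : f₀ ∈ F)
    (hB : ∀ f ∈ F, ∀ z, |ℓ f z - ℓ f₀ z| ≤ B) :
    IsBoundedLoss (fun f z => ℓ f z - ℓ f₀ z) F (-B) B where
  measurable f hf := (hℓ.measurable f hf).sub (hℓ.measurable f₀ hf₀)
  mem_Icc f hf z := abs_le.1 (hB f hf z)

-- Clamping to `[-B, B]` does not increase the distance to an excess loss, which lies there already.
lemma IsExpectationCover.sub (hG : IsExpectationCover ℓ F ψ G a b s)
    (hℓ : IsBoundedLoss ℓ F a' b') (hf₀ : f₀ ∈ F) (hB : ∀ f ∈ F, ∀ z, |ℓ f z - ℓ f₀ z| ≤ B)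
    (hB₀ : -B ≤ B) :
    IsExpectationCover (fun f z => ℓ f z - ℓ f₀ z) F
      (fun g z => Set.projIcc (-B) B hB₀ (ψ g z - ℓ f₀ z)) G (-B) B s where
  isBoundedLoss :=
    { measurable g hg := (continuous_subtype_val.comp continuous_projIcc).measurable.comp
        ((hG.isBoundedLoss.measurable g hg).sub (hℓ.measurable f₀ hf₀))
      mem_Icc g _ z := Subtype.prop _ }
  exists_integral_le f hf ν _ := by
    obtain ⟨g, hg, hle⟩ := hG.exists_integral_le f hf ν inferInstance
    refine ⟨g, hg, le_trans (integral_mono_of_nonneg (ae_of_all _ fun _ => abs_nonneg _)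
      (hG.integrable_abs_sub hℓ hf hg ν) (ae_of_all _ fun z => ?_)) hle⟩
    have := Set.abs_projIcc_sub_projIcc hB₀ (c := ℓ f z - ℓ f₀ z) (d := ψ g z - ℓ f₀ z)
    rwa [Set.projIcc_of_mem hB₀ (abs_le.1 (hB f hf z)), sub_sub_sub_cancel_right] at this

variable {ι κ κ' : Type*} [Fintype ι] [DecidableEq ι] {α : ι → Type*}
  [∀ i, MeasurableSpace (α i)] {μ : ∀ i, Measure (α i)} [∀ i, IsProbabilityMeasure (μ i)]
  {ν ν' : Measure β} [IsProbabilityMeasure ν] [IsProbabilityMeasure ν']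
  [Fintype κ] [Nonempty κ] {p : κ → (∀ i, α i) → β} {m : ℝ≥0}

theorem measure_not_rashomonSet_subset_le (hG : IsExpectationCover ℓ F ψ G a b s)
    (hℓ : IsBoundedLoss ℓ F a' b') (hf₀ : f₀ ∈ F) (hB : ∀ f ∈ F, ∀ z, |ℓ f z - ℓ f₀ z| ≤ B)
    (hp : IsOverlappingSample μ ν p m) (ε : ℝ) {δ : ℝ} (hδ : 0 < δ) :
    Measure.pi μ {x | ¬ rashomonSet F f₀ (empiricalRisk ℓ p · x)
      (ε - deviationBound (2 * B) #G δ m s) ⊆ rashomonSet F f₀ (risk ℓ ν) ε} ≤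
      ENNReal.ofReal δ := by
  obtain ⟨z⟩ : Nonempty β := ν.nonempty_of_neZero
  have hB₀ : -B ≤ B := neg_le_self ((abs_nonneg _).trans (hB f₀ hf₀ z))
  refine le_trans (measure_mono fun x hx => ?_)
    ((hG.sub hℓ hf₀ hB hB₀).measure_exists_lt_abs_empiricalRisk_sub_risk_le (hℓ.sub hf₀ hB) hp hδ)
  by_contra! h_dev
  refine hx (rashomonSet_sub_subset_rashomonSet (fun f hf => ?_) ε)
  have h_excess := not_lt.1 fun hlt => h_dev ⟨f, hf, hlt⟩
  rwa [sub_neg_eq_add, ← two_mul, empiricalRisk_sub, hℓ.risk_sub hf hf₀] at h_excess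

variable [Fintype κ'] [Nonempty κ'] {q : κ' → (∀ i, α i) → β} {m' : ℝ≥0} {b_orig b_switch : ℝ}
  {G' : Finset Γ}

theorem measure_exists_lt_abs_div_empiricalRisk_sub_le
    (hcov : ∀ s > 0, ∃ G, IsExpectationCover ℓ F ψ G 0 B s) (hℓ : IsBoundedLoss ℓ F 0 B)
    (hG : IsExpectationCover ℓ F ψ G 0 B r) (hG' : IsExpectationCover ℓ F ψ G' 0 B s)
    (hp : IsOverlappingSample μ ν p m) (hq : IsOverlappingSample μ ν' q m') (hb : 0 < b_orig)
    (h_orig : ∀ f ∈ F, ∀ᵐ x ∂Measure.pi μ, b_orig ≤ empiricalRisk ℓ p f x)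
    (h_switch : ∀ f ∈ F, ∀ᵐ x ∂Measure.pi μ, empiricalRisk ℓ q f x ≤ b_switch)
    {δ : ℝ} (hδ : 0 < δ) :
    Measure.pi μ {x | ∃ f ∈ F, b_switch / b_orig -
        (b_switch - deviationBound B #G' (δ / 2) m' s) /
          (b_orig + deviationBound B #G (δ / 2) m r) <
      |empiricalRisk ℓ q f x / empiricalRisk ℓ p f x - risk ℓ ν' f / risk ℓ ν f|} ≤
      ENNReal.ofReal δ := by
  have empirical_orig := ae_forall_empiricalRisk_mem_of_isClosed hcov hℓ isClosed_Ici h_orig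
  have empirical_switch := ae_forall_empiricalRisk_mem_of_isClosed hcov hℓ isClosed_Icc <|
    fun f hf => (h_switch f hf).mono fun x hx => Set.mem_Icc.2
      ⟨expect_nonneg fun k _ => (hℓ.mem_Icc f hf _).1, hx⟩
  have orig (f : Φ) (hf : f ∈ F) : risk ℓ ν f ∈ Set.Ici b_orig :=
    hp.risk_mem_of_ae_empiricalRisk_mem hℓ hf (convex_Ici _) isClosed_Ici (h_orig f hf)
  have switch (f : Φ) (hf : f ∈ F) : risk ℓ ν' f ∈ Set.Icc 0 b_switch :=
    hq.risk_mem_of_ae_empiricalRisk_mem hℓ hf (convex_Icc _ _) isClosed_Icc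
      (empirical_switch.mono fun x hx => hx f hf)
  have dev_orig := hG.measure_exists_lt_abs_empiricalRisk_sub_risk_le hℓ hp (half_pos hδ)
  have dev_switch := hG'.measure_exists_lt_abs_empiricalRisk_sub_risk_le hℓ hq (half_pos hδ)
  rw [sub_zero] at dev_orig dev_switch
  refine le_trans (measure_mono_ae ?_) <| (measure_union_le _ _).trans <|
    (add_le_add dev_orig dev_switch).trans_eq <| by
      rw [← ENNReal.ofReal_add (by positivity) (by positivity), add_halves]
  filter_upwards [empirical_orig, empirical_switch] with x hx_orig hx_switch
  rintro ⟨f, hf, hlt⟩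
  by_contra h_dev
  obtain ⟨h_orig_dev, h_switch_dev⟩ := not_or.1 h_dev
  exact hlt.not_ge <| abs_div_sub_div_le_of_abs_sub_le hb (hx_orig f hf) (orig f hf)
    (hx_switch f hf) (switch f hf) (not_lt.1 fun h => h_orig_dev ⟨f, hf, h⟩)
    (not_lt.1 fun h => h_switch_dev ⟨f, hf, h⟩)

theorem measure_not_rashomonSet_subset_and_forall_abs_div_sub_le
    (hcov : ∀ s > 0, ∃ G, IsExpectationCover ℓ F ψ G 0 B s) (hℓ : IsBoundedLoss ℓ F 0 B)
    (hG : IsExpectationCover ℓ F ψ G 0 B r) (hG' : IsExpectationCover ℓ F ψ G' 0 B s)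
    (hf₀ : f₀ ∈ F) (hB_ref : ∀ f ∈ F, ∀ z, |ℓ f z - ℓ f₀ z| ≤ B_ref)
    (hp : IsOverlappingSample μ ν p m) (hq : IsOverlappingSample μ ν' q m') (hb : 0 < b_orig)
    (h_orig : ∀ f ∈ F, ∀ᵐ x ∂Measure.pi μ, b_orig ≤ empiricalRisk ℓ p f x)
    (h_switch : ∀ f ∈ F, ∀ᵐ x ∂Measure.pi μ, empiricalRisk ℓ q f x ≤ b_switch)
    (ε : ℝ) {δ : ℝ} (hδ : 0 < δ) :
    Measure.pi μ {x | ¬ (rashomonSet F f₀ (empiricalRisk ℓ p · x)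
        (ε - deviationBound (2 * B_ref) #G (δ / 2) m r) ⊆ rashomonSet F f₀ (risk ℓ ν) ε ∧
      ∀ f ∈ F, |empiricalRisk ℓ q f x / empiricalRisk ℓ p f x - risk ℓ ν' f / risk ℓ ν f| ≤
        b_switch / b_orig - (b_switch - deviationBound B #G' (δ / 2 / 2) m' s) /
          (b_orig + deviationBound B #G (δ / 2 / 2) m r))} ≤ ENNReal.ofReal δ := by
  have subset_fails := measure_not_rashomonSet_subset_le hG hℓ hf₀ hB_ref hp ε (half_pos hδ)
  have ratio_fails := measure_exists_lt_abs_div_empiricalRisk_sub_le hcov hℓ hG hG' hp hq hb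
    h_orig h_switch (half_pos hδ)
  refine le_trans (measure_mono fun x hx => ?_) <| (measure_union_le _ _).trans <|
    (add_le_add subset_fails ratio_fails).trans_eq <| by
      rw [← ENNReal.ofReal_add (by positivity) (by positivity), add_halves]
  refine (not_and_or.1 hx).imp id fun h => ?_
  push Not at h
  exact h

end ModelReliance

section SwitchedSample

variable {Φ Γ ι 𝒴 𝒳₁ 𝒳₂ : Type*}

/-- The observation obtained from `q.2` by replacing its first covariate with that of `q.1`. -/
def switch (q : (𝒴 × 𝒳₁ × 𝒳₂) × (𝒴 × 𝒳₁ × 𝒳₂)) : 𝒴 × 𝒳₁ × 𝒳₂ := (q.2.1, q.1.2.1, q.2.2.2)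

/-- All switched observations formed from two distinct members of a sample. -/
def switchedSample (k : Σ i : ι, {j // j ≠ i}) (x : ι → 𝒴 × 𝒳₁ × 𝒳₂) : 𝒴 × 𝒳₁ × 𝒳₂ :=
  switch (x k.1, x k.2)

lemma empiricalRisk_eval {β : Type*} [Fintype ι] (ℓ : Φ → β → ℝ) (f : Φ) (ω : ι → β) :
    empiricalRisk ℓ Function.eval f ω = (∑ i, ℓ f (ω i)) / Fintype.card ι :=
  Fintype.expect_eq_sum_div_card _

lemma expect_sigma_ne [Fintype ι] [DecidableEq ι] (φ : ι → ι → ℝ) :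
    𝔼 k : Σ i : ι, {j // j ≠ i}, φ k.1 k.2 =
      (∑ i, ∑ j ∈ univ.erase i, φ i j) / (Fintype.card ι * (Fintype.card ι - 1)) := by
  rw [Fintype.expect_eq_sum_div_card, Fintype.sum_sigma]
  congr 1
  · refine sum_congr rfl fun i _ => (sum_subtype (univ.erase i) (fun j => ?_) (φ i)).symm
    simp
  · rw [Fintype.card_sigma]
    cases isEmpty_or_nonempty ι
    · simp
    · simp [Nat.cast_pred Fintype.card_pos]

lemma empiricalRisk_switchedSample [Fintype ι] [DecidableEq ι]
    (ℓ : Φ → 𝒴 × 𝒳₁ × 𝒳₂ → ℝ) (f : Φ) (ω : ι → 𝒴 × 𝒳₁ × 𝒳₂) :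
    empiricalRisk ℓ switchedSample f ω =
      (∑ i, ∑ j ∈ univ.erase i, ℓ f ((ω j).1, (ω i).2.1, (ω j).2.2)) /
        (Fintype.card ι * (Fintype.card ι - 1)) :=
  expect_sigma_ne fun i j => ℓ f (switch (ω i, ω j))

variable [MeasurableSpace 𝒴] [MeasurableSpace 𝒳₁] [MeasurableSpace 𝒳₂]

lemma measurable_switch : Measurable (switch (𝒴 := 𝒴) (𝒳₁ := 𝒳₁) (𝒳₂ := 𝒳₂)) := by
  unfold switch
  fun_prop

lemma risk_map_switch {ℓ : Φ → 𝒴 × 𝒳₁ × 𝒳₂ → ℝ} {f : Φ}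
    {D : Measure (𝒴 × 𝒳₁ × 𝒳₂)} (hf : Measurable (ℓ f)) :
    risk ℓ ((D.prod D).map switch) f = ∫ q, ℓ f (switch q) ∂D.prod D :=
  integral_map measurable_switch.aemeasurable hf.aestronglyMeasurable

lemma isOverlappingSample_switchedSample [Fintype ι] [DecidableEq ι] [Nonempty ι]
    (D : Measure (𝒴 × 𝒳₁ × 𝒳₂)) [IsProbabilityMeasure D] :
    IsOverlappingSample (fun _ : ι => D) ((D.prod D).map switch) switchedSample
      (Fintype.card ι / 2) :=
  (isOverlappingSample_eval_pair D).map measurable_switch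

/-- The factor by which the expected loss of `f` grows when the first covariate is replaced by an
independent copy (`0` if the expected loss vanishes). -/
noncomputable def modelReliance (ℓ : Φ → 𝒴 × 𝒳₁ × 𝒳₂ → ℝ) (D : Measure (𝒴 × 𝒳₁ × 𝒳₂))
    (f : Φ) : ℝ :=
  (∫ q, ℓ f (switch q) ∂D.prod D) / risk ℓ D f

/-- The plug-in estimator of the model reliance of `f`: the average loss over the switched
observations, divided by the average loss over the sample. -/
noncomputable def empiricalModelReliance [Fintype ι] [DecidableEq ι] (ℓ : Φ → 𝒴 × 𝒳₁ × 𝒳₂ → ℝ)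
    (f : Φ) (ω : ι → 𝒴 × 𝒳₁ × 𝒳₂) : ℝ :=
  empiricalRisk ℓ switchedSample f ω / empiricalRisk ℓ Function.eval f ω

theorem measure_not_rashomonSet_subset_and_forall_abs_modelReliance_sub_le [Fintype ι]
    [DecidableEq ι] [Nontrivial ι] {D : Measure (𝒴 × 𝒳₁ × 𝒳₂)} [IsProbabilityMeasure D]
    {ℓ : Φ → 𝒴 × 𝒳₁ × 𝒳₂ → ℝ} {F : Set Φ} {f₀ : Φ} {ψ : Γ → 𝒴 × 𝒳₁ × 𝒳₂ → ℝ}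
    {G G' : Finset Γ} {B B_ref r s b_orig b_switch : ℝ}
    (hcov : ∀ s > 0, ∃ G, IsExpectationCover ℓ F ψ G 0 B s) (hℓ : IsBoundedLoss ℓ F 0 B)
    (hG : IsExpectationCover ℓ F ψ G 0 B r) (hG' : IsExpectationCover ℓ F ψ G' 0 B s)
    (hf₀ : f₀ ∈ F) (hB_ref : ∀ f ∈ F, ∀ z, |ℓ f z - ℓ f₀ z| ≤ B_ref) (hb : 0 < b_orig)
    (h : ∀ f ∈ F, ∀ᵐ ω ∂Measure.pi fun _ : ι => D, b_orig ≤ empiricalRisk ℓ Function.eval f ω ∧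
      empiricalRisk ℓ switchedSample f ω ≤ b_switch) (ε : ℝ) {δ : ℝ} (hδ : 0 < δ) :
    Measure.pi (fun _ : ι => D) {ω | ¬ (rashomonSet F f₀ (empiricalRisk ℓ Function.eval · ω)
        (ε - deviationBound (2 * B_ref) #G (δ / 2) (Fintype.card ι) r) ⊆
          rashomonSet F f₀ (risk ℓ D) ε ∧
      ∀ f ∈ F, |empiricalModelReliance ℓ f ω - modelReliance ℓ D f| ≤
        b_switch / b_orig - (b_switch - deviationBound B #G' (δ / 2 / 2) (Fintype.card ι / 2) s) /
          (b_orig + deviationBound B #G (δ / 2 / 2) (Fintype.card ι) r))} ≤ ENNReal.ofReal δ := by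
  have : Nonempty (Σ i : ι, {j // j ≠ i}) :=
    let ⟨i, j, hij⟩ := exists_pair_ne ι
    ⟨⟨i, j, hij.symm⟩⟩
  have := Measure.isProbabilityMeasure_map (μ := D.prod D) measurable_switch.aemeasurable
  have bound := measure_not_rashomonSet_subset_and_forall_abs_div_sub_le hcov hℓ hG hG' hf₀ hB_ref
    (isOverlappingSample_eval D) (isOverlappingSample_switchedSample D) hb
    (fun f hf => (h f hf).mono fun _ => And.left) (fun f hf => (h f hf).mono fun _ => And.right)
    ε hδ
  simp only [NNReal.coe_natCast, NNReal.coe_div, NNReal.coe_ofNat] at bound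
  refine le_trans (measure_mono fun ω => mt fun ⟨h_subset, h_close⟩ =>
    ⟨h_subset, fun f hf => ?_⟩) bound
  rw [empiricalModelReliance, modelReliance, ← risk_map_switch (hℓ.measurable f hf)]
  exact h_close f hf

end SwitchedSample

end ModelClassReliance

open ModelClassReliance

theorem stmt_6_general {Φ Γ ι 𝒴 𝒳₁ 𝒳₂ : Type*} [MeasurableSpace 𝒴] [MeasurableSpace 𝒳₁]
    [MeasurableSpace 𝒳₂] [Fintype ι] [DecidableEq ι] [Nontrivial ι]
    {D : Measure (𝒴 × 𝒳₁ × 𝒳₂)} [IsProbabilityMeasure D]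
    {ℓ : Φ → 𝒴 × 𝒳₁ × 𝒳₂ → ℝ} {F : Set Φ} {f₀ : Φ} {ψ : Γ → 𝒴 × 𝒳₁ × 𝒳₂ → ℝ}
    {G G' : Finset Γ} {B B_ref r s b_orig b_switch ε δ ε₃ Q₃ mcrMax mcrMin : ℝ}
    {mcrMaxHat mcrMinHat : (ι → 𝒴 × 𝒳₁ × 𝒳₂) → ℝ}
    (hcov : ∀ s > 0, ∃ G, IsExpectationCover ℓ F ψ G 0 B s) (hℓ : IsBoundedLoss ℓ F 0 B)
    (hG : IsExpectationCover ℓ F ψ G 0 B r) (hG' : IsExpectationCover ℓ F ψ G' 0 B s)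
    (hf₀ : f₀ ∈ F) (hB_ref : ∀ f ∈ F, ∀ z, |ℓ f z - ℓ f₀ z| ≤ B_ref) (hb : 0 < b_orig)
    (h : ∀ f ∈ F, ∀ᵐ ω ∂Measure.pi fun _ : ι => D, b_orig ≤ empiricalRisk ℓ Function.eval f ω ∧
      empiricalRisk ℓ switchedSample f ω ≤ b_switch) (hδ : 0 < δ)
    (hε₃ : ε₃ = ε - deviationBound (2 * B_ref) G.card (δ / 2) (Fintype.card ι) r)
    (hQ₃ : Q₃ = b_switch / b_orig -
      (b_switch - deviationBound B G'.card (δ / 2 / 2) (Fintype.card ι / 2) s) /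
        (b_orig + deviationBound B G.card (δ / 2 / 2) (Fintype.card ι) r))
    (hMax : IsGreatest (modelReliance ℓ D '' rashomonSet F f₀ (risk ℓ D) ε) mcrMax)
    (hMin : IsLeast (modelReliance ℓ D '' rashomonSet F f₀ (risk ℓ D) ε) mcrMin)
    (hMaxHat : ∀ ω, IsGreatest ((empiricalModelReliance ℓ · ω) ''
      rashomonSet F f₀ (empiricalRisk ℓ Function.eval · ω) ε₃) (mcrMaxHat ω))
    (hMinHat : ∀ ω, IsLeast ((empiricalModelReliance ℓ · ω) ''
      rashomonSet F f₀ (empiricalRisk ℓ Function.eval · ω) ε₃) (mcrMinHat ω)) :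
    (Measure.pi fun _ : ι => D) {ω | mcrMax < mcrMaxHat ω - Q₃} ≤ ENNReal.ofReal δ ∧
    (Measure.pi fun _ : ι => D) {ω | mcrMinHat ω + Q₃ < mcrMin} ≤ ENNReal.ofReal δ := by
  have good := measure_not_rashomonSet_subset_and_forall_abs_modelReliance_sub_le hcov hℓ hG hG'
    hf₀ hB_ref hb h ε hδ
  rw [← hε₃, ← hQ₃] at good
  have subset_F := rashomonSet_subset hf₀ (risk ℓ D) ε
  exact ⟨(measure_lt_sub_le_of_mem_image _ subset_F (fun ω => (hMaxHat ω).1)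
      fun f hf => hMax.2 (Set.mem_image_of_mem _ hf)).trans good,
    (measure_add_lt_le_of_mem_image _ subset_F (fun ω => (hMinHat ω).1)
      fun f hf => hMin.2 (Set.mem_image_of_mem _ hf)).trans good⟩

/-- Theorem 6 (inner finite-sample bounds for model class reliance): if
Assumptions 1, 2, 3 hold for all `f ∈ ℱ`, then with probability at least
`1 − δ`, `MCR₊(ε) ≥ MCR̂₊(ε₃) − Q₃`, and with probability at least `1 − δ`,
`MCR₋(ε) ≤ MCR̂₋(ε₃) + Q₃`, where `ε₃ = ε − 2B_ref√(log(4𝒩(ℱ,r)/δ)/(2n)) − 2r`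
and `Q₃ = q(δ/2, r, n)`. -/
theorem stmt_6 {𝒴 𝒳1 𝒳2 : Type*}
    [MeasurableSpace 𝒴] [MeasurableSpace 𝒳1] [MeasurableSpace 𝒳2]
    (D : Measure (𝒴 × 𝒳1 × 𝒳2)) [IsProbabilityMeasure D]
    (F : Set ((𝒳1 × 𝒳2) → 𝒴))
    (L : ((𝒳1 × 𝒳2) → 𝒴) → (𝒴 × 𝒳1 × 𝒳2) → ℝ)
    (hL : ∀ f z, 0 ≤ L f z)
    (hLmeas : ∀ f ∈ F, Measurable (L f))
    (fref : (𝒳1 × 𝒳2) → 𝒴) (hfref : fref ∈ F)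
    (n : ℕ) (hn : 2 ≤ n)
    (Bind Bref borig Bswitch : ℝ) (hborig : 0 < borig)
    (ε r δ : ℝ) (hε : 0 ≤ ε) (hr : 0 < r) (hδ : δ ∈ Set.Ioo (0 : ℝ) 1)
    -- population quantities
    (eorig eswitch : ((𝒳1 × 𝒳2) → 𝒴) → ℝ)
    (heorig : ∀ f, eorig f = ∫ z, L f z ∂D)
    (heswitch : ∀ f, eswitch f = ∫ q, L f (q.2.1, q.1.2.1, q.2.2.2) ∂(D.prod D))
    (MR : ((𝒳1 × 𝒳2) → 𝒴) → ℝ) (hMR : ∀ f, MR f = eswitch f / eorig f)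
    (R : ℝ → Set ((𝒳1 × 𝒳2) → 𝒴))
    (hR : ∀ e, R e = insert fref {f ∈ F | eorig f ≤ eorig fref + e})
    -- empirical quantities, over the i.i.d. sample measure `P = Dⁿ`
    (P : Measure (Fin n → 𝒴 × 𝒳1 × 𝒳2)) (hP : P = Measure.pi fun _ => D)
    (ehatorig ehatswitch : ((𝒳1 × 𝒳2) → 𝒴) → (Fin n → 𝒴 × 𝒳1 × 𝒳2) → ℝ)
    (hehatorig : ∀ f ω, ehatorig f ω = (∑ i, L f (ω i)) / n)
    (hehatswitch : ∀ f ω, ehatswitch f ω =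
      (∑ i, ∑ j ∈ Finset.univ.erase i, L f ((ω j).1, (ω i).2.1, (ω j).2.2)) /
        ((n : ℝ) * ((n : ℝ) - 1)))
    (MRhat : ((𝒳1 × 𝒳2) → 𝒴) → (Fin n → 𝒴 × 𝒳1 × 𝒳2) → ℝ)
    (hMRhat : ∀ f ω, MRhat f ω = ehatswitch f ω / ehatorig f ω)
    -- empirical Rashomon sets, defined for any real `e` (possibly negative)
    (Rhat : ℝ → (Fin n → 𝒴 × 𝒳1 × 𝒳2) → Set ((𝒳1 × 𝒳2) → 𝒴))
    (hRhat : ∀ e ω, Rhat e ω =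
      insert fref {f ∈ F | ehatorig f ω ≤ ehatorig fref ω + e})
    -- `f₊,ε` and `f₋,ε` attain the highest and lowest model reliance on `R(ε)`
    (fplus fminus : (𝒳1 × 𝒳2) → 𝒴)
    (hfplus : fplus ∈ R ε ∧ ∀ f ∈ R ε, MR f ≤ MR fplus)
    (hfminus : fminus ∈ R ε ∧ ∀ f ∈ R ε, MR fminus ≤ MR f)
    -- the empirical MCR values `MCR̂₊(e)`, `MCR̂₋(e)`, assumed to be attained
    (MCRhatP MCRhatM : ℝ → (Fin n → 𝒴 × 𝒳1 × 𝒳2) → ℝ)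
    (hMCRhatP : ∀ e ω, IsGreatest ((fun f => MRhat f ω) '' Rhat e ω) (MCRhatP e ω))
    (hMCRhatM : ∀ e ω, IsLeast ((fun f => MRhat f ω) '' Rhat e ω) (MCRhatM e ω))
    -- Assumptions 1, 2, 3 for all `f ∈ ℱ`
    (hA1 : ∀ f ∈ F, ∀ z, L f z ≤ Bind)
    (hA2 : ∀ f ∈ F, ∀ z, |L f z - L fref z| ≤ Bref)
    (hA3 : ∀ f ∈ F, ∀ᵐ ω ∂P, borig ≤ ehatorig f ω ∧ ehatswitch f ω ≤ Bswitch)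
    -- `𝒩(ℱ, s)`: the size of the smallest `s`-margin-expectation-cover of `ℱ`
    (N : ℝ → ℕ)
    (hN : ∀ s : ℝ, 0 < s → IsLeast
      {m : ℕ | ∃ G : Finset ((𝒳1 × 𝒳2) → 𝒴), G.card = m ∧
        (∀ g ∈ G, Measurable (L g) ∧ ∀ z, 0 ≤ L g z ∧ L g z ≤ Bind) ∧
        ∀ f ∈ F, ∀ D' : Measure (𝒴 × 𝒳1 × 𝒳2), IsProbabilityMeasure D' →
          ∃ g ∈ G, (∫ z, |L f z - L g z| ∂D') ≤ s} (N s))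
    -- `ε₃` and `Q₃ = q(δ/2, r, n)`
    (ε₃ Q₃ : ℝ)
    (hε₃ : ε₃ = ε - 2 * Bref * Real.sqrt (Real.log (4 * (N r : ℝ) / δ) / (2 * n)) - 2 * r)
    (hQ₃ : Q₃ = Bswitch / borig -
      (Bswitch - (Bind * Real.sqrt (Real.log (4 * (N (r * Real.sqrt 2) : ℝ) / (δ / 2)) / n)
          + 2 * r * Real.sqrt 2)) /
        (borig + (Bind * Real.sqrt (Real.log (4 * (N r : ℝ) / (δ / 2)) / (2 * n)) + 2 * r))) :
    P {ω | MR fplus < MCRhatP ε₃ ω - Q₃} ≤ ENNReal.ofReal δ ∧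
    P {ω | MCRhatM ε₃ ω + Q₃ < MR fminus} ≤ ENNReal.ofReal δ := by
  subst hP
  have : Nontrivial (Fin n) := Fin.nontrivial_iff_two_le.2 hn
  obtain rfl : eorig = risk L D := funext heorig
  obtain rfl : MR = modelReliance L D := by
    simp [funext_iff, hMR, heswitch, modelReliance, switch]
  obtain rfl : R = rashomonSet F fref (risk L D) := funext hR
  obtain rfl : ehatorig = empiricalRisk L Function.eval := by
    simp [funext_iff, hehatorig, empiricalRisk_eval]
  obtain rfl : ehatswitch = empiricalRisk L switchedSample := by
    simp [funext_iff, hehatswitch, empiricalRisk_switchedSample]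
  obtain rfl : MRhat = empiricalModelReliance L := funext₂ hMRhat
  obtain rfl : Rhat = fun e ω => rashomonSet F fref (empiricalRisk L Function.eval · ω) e :=
    funext₂ hRhat
  have cover (s : ℝ) (hs : 0 < s) : ∃ G, G.card = N s ∧ IsExpectationCover L F L G 0 Bind s :=
    (hN s hs).1.imp fun G ⟨hcard, hbounded, hclose⟩ =>
      ⟨hcard, ⟨fun g hg => (hbounded g hg).1, fun g hg => (hbounded g hg).2⟩, hclose⟩
  obtain ⟨G, hG_card, hG⟩ := cover r hr
  obtain ⟨G', hG'_card, hG'⟩ := cover (r * √2) (by positivity)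
  exact stmt_6_general (fun s hs => (cover s hs).imp fun _ => And.right)
    ⟨hLmeas, fun f hf z => ⟨hL f z, hA1 f hf z⟩⟩ hG hG' hfref hA2 hborig hA3 hδ.1
    (by simp only [hε₃, deviationBound_half, hG_card, Fintype.card_fin, sub_sub])
    (by simp only [hQ₃, deviationBound_half, hG_card, hG'_card, Fintype.card_fin, ← mul_assoc,
      mul_div_cancel₀ (n : ℝ) two_ne_zero])
    ⟨Set.mem_image_of_mem _ hfplus.1, Set.forall_mem_image.2 hfplus.2⟩
    ⟨Set.mem_image_of_mem _ hfminus.1, Set.forall_mem_image.2 hfminus.2⟩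
    (hMCRhatP ε₃) (hMCRhatM ε₃)
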